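/- There are universal constants c > 0 and c₃ > 0 such that the following holds. Let n, d be positive integers, λ ∈ ℝ^d with positive entries, and let (X, y) be a λ-anisotropic subgaussian sample of size n in dimension d with Gram matrix K = X Xᵀ. If d_∞ ≥ c₃ (n + log(1/δ)) for δ ∈ (0, 1/2), then with probability at least 1 − δ, K is invertible and the operator norm satisfies ‖K⁻¹ − ‖λ‖₁⁻¹ I_n‖ ≤ (c/‖λ‖₁) ( √((n + log(1/δ))/d₂) + (n + log(1/δ))/d_∞ ). -/

import Mathlib

open MeasureTheory ProbabilityTheory Matrix
open scoped Matrix.Norms.L2Operator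

noncomputable section

/-- `(X, y)` (with underlying matrix `Z` of independent, mean-zero, unit-variance,
1-subgaussian entries) is a `lam`-anisotropic subgaussian sample: `X = Z diag(lam)^{1/2}`. -/
structure IsAnisoSample {Ω : Type*} [MeasurableSpace Ω] (μ : Measure Ω)
    {n d : ℕ} (lam : Fin d → ℝ)
    (Z X : Ω → Matrix (Fin n) (Fin d) ℝ) (y : Fin n → ℝ) : Prop where
  lam_pos : ∀ j, 0 < lam j
  labels : ∀ i, y i = 1 ∨ y i = -1
  meas : ∀ i j, Measurable fun ω => Z ω i j
  indep : iIndepFun (fun (p : Fin n × Fin d) ω => Z ω p.1 p.2) μ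
  mean_zero : ∀ i j, ∫ ω, Z ω i j ∂μ = 0
  var_one : ∀ i j, ∫ ω, (Z ω i j) ^ 2 ∂μ = 1
  subg_int : ∀ i j (t : ℝ), Integrable (fun ω => Real.exp (t * Z ω i j)) μ
  subg : ∀ i j (t : ℝ), ∫ ω, Real.exp (t * Z ω i j) ∂μ ≤ Real.exp (t ^ 2 / 2)
  X_eq : ∀ ω i j, X ω i j = Real.sqrt (lam j) * Z ω i j

/-- ℓ₂ dimension proxy `d₂ = ‖λ‖₁²/‖λ‖₂²`. -/
def dim2 {d : ℕ} (lam : Fin d → ℝ) : ℝ := (∑ j, lam j) ^ 2 / ∑ j, (lam j) ^ 2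

/-- ℓ∞ dimension proxy `d∞ = ‖λ‖₁/‖λ‖∞`. -/
def dimInf {d : ℕ} (lam : Fin d → ℝ) : ℝ := (∑ j, lam j) / ⨆ j, lam j

/-!
For a unit vector `v`, the quadratic form `⟪(K - ‖λ‖₁ I) v, v⟫` is `∑ j, λ_j ((v ᵥ* Z)_j ² - 1)`,
where the coordinates of `v ᵥ* Z` are independent, of unit variance and again `1`-subgaussian. The
square of a subgaussian variable is subexponential once centred, so Bernstein's inequality gives a
deviation of order `‖λ‖₂ √L + ‖λ‖_∞ L` except with probability `2 exp (-L)`. A union bound over a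
`1/2`-net of the sphere, with at most `5 ^ n` points, turns this into a bound on
`‖K - ‖λ‖₁ I‖`; the factor `5 ^ n` is absorbed by taking `L` proportional to `n + log (1/δ)`. The
hypothesis on `d_∞` makes that bound at most `‖λ‖₁ / 2`, and a perturbation argument for inverses
in a Banach algebra transfers it to `K⁻¹`.
-/

open Metric
open scoped NNReal ENNReal

section ExpSquare

variable {Ω : Type*} [MeasurableSpace Ω] {μ : Measure Ω} {X : Ω → ℝ}

lemma gaussianPDFReal_zero_mul_exp_sq {v : ℝ≥0} (hv : v ≠ 0) (a x : ℝ) :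
    gaussianPDFReal 0 v x * Real.exp (a * x ^ 2 / 2) =
      (√(2 * Real.pi * v))⁻¹ * Real.exp (-((1 - a * v) / (2 * v)) * x ^ 2) := by
  have hv' : (v : ℝ) ≠ 0 := NNReal.coe_ne_zero.2 hv
  rw [gaussianPDFReal, mul_assoc, ← Real.exp_add]
  congr 2
  field_simp
  ring

lemma integrable_exp_sq_gaussianReal {v : ℝ≥0} {a : ℝ} (h : a * v < 1) :
    Integrable (fun g ↦ Real.exp (a * g ^ 2 / 2)) (gaussianReal 0 v) := by
  rcases eq_or_ne v 0 with rfl | hv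
  · simp only [gaussianReal_zero_var]
    exact integrable_dirac (by simp)
  have hv' : 0 < (v : ℝ) := NNReal.coe_pos.2 (pos_iff_ne_zero.2 hv)
  rw [gaussianReal_of_var_ne_zero 0 hv, integrable_withDensity_iff_integrable_smul' (by fun_prop)
    (ae_of_all _ fun _ ↦ gaussianPDF_lt_top)]
  simp only [toReal_gaussianPDF, smul_eq_mul, gaussianPDFReal_zero_mul_exp_sq hv]
  exact (integrable_exp_neg_mul_sq (div_pos (by linarith) (by positivity))).const_mul _

lemma integral_exp_sq_gaussianReal {v : ℝ≥0} {a : ℝ} (h : a * v < 1) :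
    ∫ g, Real.exp (a * g ^ 2 / 2) ∂gaussianReal 0 v = (√(1 - a * v))⁻¹ := by
  rcases eq_or_ne v 0 with rfl | hv
  · simp [gaussianReal_zero_var]
  have hv' : 0 < (v : ℝ) := NNReal.coe_pos.2 (pos_iff_ne_zero.2 hv)
  have ha : 0 < 1 - a * v := by linarith
  simp only [integral_gaussianReal_eq_integral_smul hv, smul_eq_mul,
    gaussianPDFReal_zero_mul_exp_sq hv]
  rw [integral_const_mul, integral_gaussian, ← Real.sqrt_inv, ← Real.sqrt_inv,
    ← Real.sqrt_mul (by positivity)]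
  congr 1
  field_simp

lemma exp_mul_sq_eq_integral_gaussianReal (s : ℝ≥0) (x : ℝ) :
    Real.exp (s * x ^ 2) = ∫ g, Real.exp (x * g) ∂gaussianReal 0 (2 * s) := by
  have h := congrFun (mgf_fun_id_gaussianReal (μ := 0) (v := 2 * s)) x
  rw [mgf] at h
  rw [h]
  congr 1
  push_cast
  ring

-- `exp (s X²) = E exp (X g)` for `g ~ N(0, 2s)`, which is linear in `X`; swap the expectations.
lemma lintegral_exp_sq_le_of_hasSubgaussianMGF [SFinite μ] {c s : ℝ≥0}
    (hX : HasSubgaussianMGF X c μ) (hs : (c : ℝ) * (2 * s) < 1) :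
    ∫⁻ ω, ENNReal.ofReal (Real.exp (s * X ω ^ 2)) ∂μ ≤
      ENNReal.ofReal (√(1 - c * (2 * s)))⁻¹ := by
  have hXm : AEMeasurable X μ := hX.aemeasurable
  have hs' : (c : ℝ) * (2 * s : ℝ≥0) < 1 := mod_cast hs
  calc ∫⁻ ω, ENNReal.ofReal (Real.exp (s * X ω ^ 2)) ∂μ
      = ∫⁻ ω, ∫⁻ g, ENNReal.ofReal (Real.exp (X ω * g)) ∂gaussianReal 0 (2 * s) ∂μ := by
        refine lintegral_congr fun ω ↦ ?_
        rw [exp_mul_sq_eq_integral_gaussianReal, ofReal_integral_eq_lintegral_ofReal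
          (integrable_exp_mul_gaussianReal _) (ae_of_all _ fun _ ↦ (Real.exp_pos _).le)]
    _ = ∫⁻ g, ∫⁻ ω, ENNReal.ofReal (Real.exp (X ω * g)) ∂μ ∂gaussianReal 0 (2 * s) :=
        lintegral_lintegral_swap (by fun_prop)
    _ ≤ ∫⁻ g, ENNReal.ofReal (Real.exp (c * g ^ 2 / 2)) ∂gaussianReal 0 (2 * s) := by
        refine lintegral_mono fun g ↦ ?_
        simp only [mul_comm _ g]
        rw [← ofReal_integral_eq_lintegral_ofReal (hX.integrable_exp_mul g)
          (ae_of_all _ fun _ ↦ (Real.exp_pos _).le)]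
        exact ENNReal.ofReal_le_ofReal (hX.mgf_le g)
    _ = ENNReal.ofReal (√(1 - c * (2 * s)))⁻¹ := by
        rw [← ofReal_integral_eq_lintegral_ofReal (integrable_exp_sq_gaussianReal hs')
          (ae_of_all _ fun _ ↦ (Real.exp_pos _).le), integral_exp_sq_gaussianReal hs']
        push_cast
        rfl

lemma integrable_exp_sq_of_hasSubgaussianMGF [SFinite μ] {c s : ℝ≥0}
    (hX : HasSubgaussianMGF X c μ) (hs : (c : ℝ) * (2 * s) < 1) :
    Integrable (fun ω ↦ Real.exp (s * X ω ^ 2)) μ := by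
  have hXm : AEMeasurable X μ := hX.aemeasurable
  refine ⟨AEMeasurable.aestronglyMeasurable (by fun_prop), ?_⟩
  rw [hasFiniteIntegral_iff_ofReal (ae_of_all _ fun _ ↦ (Real.exp_pos _).le)]
  exact (lintegral_exp_sq_le_of_hasSubgaussianMGF hX hs).trans_lt ENNReal.ofReal_lt_top

lemma integral_exp_sq_le_of_hasSubgaussianMGF [SFinite μ] {c s : ℝ≥0}
    (hX : HasSubgaussianMGF X c μ) (hs : (c : ℝ) * (2 * s) < 1) :
    ∫ ω, Real.exp (s * X ω ^ 2) ∂μ ≤ (√(1 - c * (2 * s)))⁻¹ := by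
  rw [← ENNReal.ofReal_le_ofReal_iff (by positivity), ofReal_integral_eq_lintegral_ofReal
    (integrable_exp_sq_of_hasSubgaussianMGF hX hs) (ae_of_all _ fun _ ↦ (Real.exp_pos _).le)]
  exact lintegral_exp_sq_le_of_hasSubgaussianMGF hX hs

end ExpSquare

section Subexponential

variable {Ω : Type*} [MeasurableSpace Ω] {μ : Measure Ω} {X : Ω → ℝ} {v b : ℝ}

/-- `X` is subexponential with variance proxy `v` and scale `b`: its moment generating function is
that of a centred Gaussian of variance `v` on the range `|t| ≤ 1 / b`. The range is written
`|t| * b ≤ 1` so that `b = 0` puts no restriction on `t`, which is the subgaussian case. -/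
structure HasSubexponentialMGF (X : Ω → ℝ) (v b : ℝ) (μ : Measure Ω) : Prop where
  integrable_exp_mul : ∀ t : ℝ, |t| * b ≤ 1 → Integrable (fun ω ↦ Real.exp (t * X ω)) μ
  mgf_le : ∀ t : ℝ, |t| * b ≤ 1 → mgf X μ t ≤ Real.exp (v * t ^ 2 / 2)

lemma exp_sub_one_sub_le_sq_mul_exp_abs (x : ℝ) : Real.exp x - 1 - x ≤ x ^ 2 * Real.exp |x| := by
  have h := Complex.norm_exp_sub_sum_le_norm_mul_exp (x : ℂ) 2
  have hx : Complex.exp x - ∑ m ∈ Finset.range 2, (x : ℂ) ^ m / m.factorial =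
      ((Real.exp x - 1 - x : ℝ) : ℂ) := by
    simp [Finset.sum_range_succ, sub_sub]
  rw [hx, Complex.norm_real, Complex.norm_real, Real.norm_eq_abs, Real.norm_eq_abs, sq_abs] at h
  exact (le_abs_self _).trans h

lemma sq_mul_exp_le_two_mul_exp_two_mul {x : ℝ} (hx : 0 ≤ x) :
    x ^ 2 * Real.exp x ≤ 2 * Real.exp (2 * x) := by
  have h : x ^ 2 ≤ 2 * Real.exp x := by linarith [Real.quadratic_le_exp_of_nonneg hx]
  calc x ^ 2 * Real.exp x ≤ 2 * Real.exp x * Real.exp x := by gcongr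
    _ = 2 * Real.exp (2 * x) := by rw [mul_assoc, ← Real.exp_add, two_mul x]

lemma exp_mul_le_of_abs_mul_le_one {t : ℝ} (hb : 0 < b) (ht : |t| * b ≤ 1) (x : ℝ) :
    Real.exp (t * x) ≤ 1 + t * x + 2 * (t * b) ^ 2 * Real.exp (2 * (|x| / b)) := by
  have hx : 0 ≤ |x| / b := by positivity
  have htx : |t * x| ≤ |x| / b := by
    rw [abs_mul, le_div_iff₀ hb]
    nlinarith [abs_nonneg x]
  have hsq : (t * x) ^ 2 = (t * b) ^ 2 * (|x| / b) ^ 2 := by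
    rw [div_pow, sq_abs]
    field_simp
  calc Real.exp (t * x) ≤ 1 + t * x + (t * x) ^ 2 * Real.exp |t * x| := by
        linarith [exp_sub_one_sub_le_sq_mul_exp_abs (t * x)]
    _ ≤ 1 + t * x + (t * b) ^ 2 * ((|x| / b) ^ 2 * Real.exp (|x| / b)) := by
        rw [hsq, mul_assoc]
        gcongr
    _ ≤ 1 + t * x + (t * b) ^ 2 * (2 * Real.exp (2 * (|x| / b))) := by
        gcongr 1 + t * x + (t * b) ^ 2 * ?_
        exact sq_mul_exp_le_two_mul_exp_two_mul hx
    _ = 1 + t * x + 2 * (t * b) ^ 2 * Real.exp (2 * (|x| / b)) := by ring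

namespace HasSubexponentialMGF

lemma of_integral_exp_abs_le [IsProbabilityMeasure μ] {M : ℝ} (hb : 0 < b) (hX : Integrable X μ)
    (hmean : ∫ ω, X ω ∂μ = 0) (hexp : Integrable (fun ω ↦ Real.exp (2 * (|X ω| / b))) μ)
    (hM : ∫ ω, Real.exp (2 * (|X ω| / b)) ∂μ ≤ M) :
    HasSubexponentialMGF X (4 * M * b ^ 2) b μ := by
  have hlin (t : ℝ) : Integrable (fun ω ↦ 1 + t * X ω) μ :=
    (integrable_const 1).add (hX.const_mul t)
  have hquad (t : ℝ) : Integrable (fun ω ↦ 2 * (t * b) ^ 2 * Real.exp (2 * (|X ω| / b))) μ :=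
    hexp.const_mul _
  have hint (t : ℝ) (ht : |t| * b ≤ 1) : Integrable (fun ω ↦ Real.exp (t * X ω)) μ := by
    have hXm : AEMeasurable X μ := hX.aemeasurable
    refine ((hlin t).add (hquad t)).mono' (AEMeasurable.aestronglyMeasurable (by fun_prop))
      (ae_of_all _ fun ω ↦ ?_)
    rw [Real.norm_eq_abs, Real.abs_exp]
    exact exp_mul_le_of_abs_mul_le_one hb ht _
  refine ⟨hint, fun t ht ↦ ?_⟩
  calc mgf X μ t
      ≤ ∫ ω, (1 + t * X ω + 2 * (t * b) ^ 2 * Real.exp (2 * (|X ω| / b))) ∂μ :=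
        integral_mono (hint t ht) ((hlin t).add (hquad t)) fun ω ↦
          exp_mul_le_of_abs_mul_le_one hb ht _
    _ = 1 + 2 * (t * b) ^ 2 * ∫ ω, Real.exp (2 * (|X ω| / b)) ∂μ := by
        rw [integral_add (hlin t) (hquad t), integral_add (integrable_const 1) (hX.const_mul t),
          integral_const_mul, integral_const_mul, hmean]
        simp
    _ ≤ 1 + 2 * (t * b) ^ 2 * M := by gcongr
    _ = 4 * M * b ^ 2 * t ^ 2 / 2 + 1 := by ring
    _ ≤ Real.exp (4 * M * b ^ 2 * t ^ 2 / 2) := Real.add_one_le_exp _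

lemma mono_scale {b' : ℝ} (h : HasSubexponentialMGF X v b μ) (hb : b ≤ b') :
    HasSubexponentialMGF X v b' μ where
  integrable_exp_mul t ht := h.integrable_exp_mul t (le_trans (by gcongr) ht)
  mgf_le t ht := h.mgf_le t (le_trans (by gcongr) ht)

lemma const_mul (h : HasSubexponentialMGF X v b μ) (r : ℝ) :
    HasSubexponentialMGF (fun ω ↦ r * X ω) (r ^ 2 * v) (|r| * b) μ := by
  have hrange {t : ℝ} (ht : |t| * (|r| * b) ≤ 1) : |r * t| * b ≤ 1 := by
    rwa [abs_mul, mul_comm |r|, mul_assoc]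
  refine ⟨fun t ht ↦ ?_, fun t ht ↦ ?_⟩
  · simpa only [mul_left_comm t r, ← mul_assoc] using h.integrable_exp_mul (r * t) (hrange ht)
  · rw [mgf_const_mul]
    convert h.mgf_le (r * t) (hrange ht) using 2
    ring

lemma neg (h : HasSubexponentialMGF X v b μ) : HasSubexponentialMGF (-X) v b μ := by
  simpa [Pi.neg_def] using h.const_mul (-1)

lemma sum_of_iIndepFun {ι : Type*} {Y : ι → Ω → ℝ} {w : ι → ℝ} (hindep : iIndepFun Y μ)
    (hmeas : ∀ i, Measurable (Y i)) {s : Finset ι}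
    (h : ∀ i ∈ s, HasSubexponentialMGF (Y i) (w i) b μ) :
    HasSubexponentialMGF (fun ω ↦ ∑ i ∈ s, Y i ω) (∑ i ∈ s, w i) b μ := by
  have hsum : (fun ω ↦ ∑ i ∈ s, Y i ω) = ∑ i ∈ s, Y i := by
    ext ω
    rw [Finset.sum_apply]
  rw [hsum]
  have := hindep.isProbabilityMeasure
  refine ⟨fun t ht ↦ ?_, fun t ht ↦ ?_⟩
  · exact hindep.integrable_exp_mul_sum hmeas fun i hi ↦ (h i hi).integrable_exp_mul t ht
  · calc mgf (∑ i ∈ s, Y i) μ t = ∏ i ∈ s, mgf (Y i) μ t := hindep.mgf_sum hmeas s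
      _ ≤ ∏ i ∈ s, Real.exp (w i * t ^ 2 / 2) :=
          Finset.prod_le_prod (fun i _ ↦ mgf_nonneg) fun i hi ↦ (h i hi).mgf_le t ht
      _ = Real.exp ((∑ i ∈ s, w i) * t ^ 2 / 2) := by
          rw [← Real.exp_sum, Finset.sum_mul, Finset.sum_div]

lemma measureReal_ge_le_exp [IsFiniteMeasure μ] (h : HasSubexponentialMGF X v b μ) {t : ℝ}
    (ht : 0 ≤ t) (htb : t * b ≤ 1) (r : ℝ) :
    μ.real {ω | r ≤ X ω} ≤ Real.exp (-t * r + v * t ^ 2 / 2) := by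
  have htb' : |t| * b ≤ 1 := by rwa [abs_of_nonneg ht]
  calc μ.real {ω | r ≤ X ω} ≤ Real.exp (-t * r) * mgf X μ t :=
        measure_ge_le_exp_mul_mgf r ht (h.integrable_exp_mul t htb')
    _ ≤ Real.exp (-t * r) * Real.exp (v * t ^ 2 / 2) := by
        gcongr
        exact h.mgf_le t htb'
    _ = Real.exp (-t * r + v * t ^ 2 / 2) := (Real.exp_add _ _).symm

-- The Chernoff exponent is optimised at `t = √(2L/v)`, capped at the endpoint `t = 1/b`.
lemma measureReal_ge_le_exp_neg [IsFiniteMeasure μ] (h : HasSubexponentialMGF X v b μ)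
    (hb : 0 < b) {L : ℝ} (hL : 0 ≤ L) :
    μ.real {ω | √(2 * v * L) + 2 * b * L ≤ X ω} ≤ Real.exp (-L) := by
  rcases le_or_gt v (2 * L * b ^ 2) with hv | hv
  · refine (h.measureReal_ge_le_exp (t := b⁻¹) (by positivity)
      (inv_mul_cancel₀ hb.ne').le _).trans (Real.exp_le_exp.2 ?_)
    have hsqrt : 0 ≤ b⁻¹ * √(2 * v * L) := by positivity
    have hlin : b⁻¹ * (2 * b * L) = 2 * L := by field_simp
    have hquad : v * b⁻¹ ^ 2 / 2 ≤ L := by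
      rw [inv_pow, ← div_eq_mul_inv, div_div, div_le_iff₀ (by positivity)]
      linarith
    linarith
  · have hv0 : 0 < v := lt_of_le_of_lt (by positivity) hv
    have htb : √(2 * L / v) * b ≤ 1 := by
      rw [← Real.sqrt_sq hb.le, ← Real.sqrt_mul (by positivity), Real.sqrt_le_one,
        div_mul_eq_mul_div, div_le_one hv0]
      exact hv.le
    refine (h.measureReal_ge_le_exp (Real.sqrt_nonneg _) htb _).trans (Real.exp_le_exp.2 ?_)
    have hsqrt : √(2 * L / v) * √(2 * v * L) = 2 * L := by
      rw [← Real.sqrt_mul (by positivity), Real.sqrt_eq_iff_mul_self_eq (by positivity)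
        (by positivity)]
      field_simp
    have hlin : 0 ≤ √(2 * L / v) * (2 * b * L) := by positivity
    have hquad : v * √(2 * L / v) ^ 2 / 2 = L := by
      rw [Real.sq_sqrt (by positivity)]
      field_simp
    linarith

lemma measureReal_abs_ge_le [IsFiniteMeasure μ] (h : HasSubexponentialMGF X v b μ)
    (hb : 0 < b) {L : ℝ} (hL : 0 ≤ L) :
    μ.real {ω | √(2 * v * L) + 2 * b * L ≤ |X ω|} ≤ 2 * Real.exp (-L) := by
  simp only [le_abs, Set.ofPred_or]
  have hpos := h.measureReal_ge_le_exp_neg hb hL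
  have hneg := h.neg.measureReal_ge_le_exp_neg hb hL
  simp only [Pi.neg_apply] at hneg
  linarith [measureReal_union_le (μ := μ) {ω | √(2 * v * L) + 2 * b * L ≤ X ω}
    {ω | √(2 * v * L) + 2 * b * L ≤ -X ω}]

end HasSubexponentialMGF

end Subexponential

section SubgaussianSq

variable {Ω : Type*} [MeasurableSpace Ω] {μ : Measure Ω} [IsProbabilityMeasure μ] {X : Ω → ℝ}

lemma integrable_and_integral_exp_sq_div_le_sqrt_two {c : ℝ≥0} (hc : c ≠ 0)
    (hX : HasSubgaussianMGF X c μ) :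
    Integrable (fun ω ↦ Real.exp (X ω ^ 2 / (4 * c))) μ ∧
      ∫ ω, Real.exp (X ω ^ 2 / (4 * c)) ∂μ ≤ √2 := by
  have hc' : (c : ℝ) ≠ 0 := NNReal.coe_ne_zero.2 hc
  have hs : (c : ℝ) * (2 * ((4 * c)⁻¹ : ℝ≥0)) = 1 / 2 := by
    push_cast
    field_simp
    norm_num
  have hexp (ω : Ω) : X ω ^ 2 / (4 * c) = ((4 * c)⁻¹ : ℝ≥0) * X ω ^ 2 := by
    push_cast
    ring
  simp only [hexp]
  refine ⟨integrable_exp_sq_of_hasSubgaussianMGF hX (by rw [hs]; norm_num), ?_⟩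
  refine (integral_exp_sq_le_of_hasSubgaussianMGF hX (by rw [hs]; norm_num)).trans_eq ?_
  rw [hs, ← Real.sqrt_inv]
  norm_num

lemma exp_integral_sq_div_le_sqrt_two {c : ℝ≥0} (hc : c ≠ 0) (hX : HasSubgaussianMGF X c μ) :
    Real.exp ((∫ ω, X ω ^ 2 ∂μ) / (4 * c)) ≤ √2 := by
  obtain ⟨hint, hle⟩ := integrable_and_integral_exp_sq_div_le_sqrt_two hc hX
  refine le_trans ?_ hle
  rw [← integral_div]
  exact convexOn_exp.map_integral_le Real.continuous_exp.continuousOn isClosed_univ (by simp)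
    ((hX.memLp 2).integrable_sq.div_const _) hint

lemma hasSubexponentialMGF_sq_sub_integral {c : ℝ≥0} (hc : c ≠ 0)
    (hX : HasSubgaussianMGF X c μ) :
    HasSubexponentialMGF (fun ω ↦ X ω ^ 2 - ∫ ω', X ω' ^ 2 ∂μ) (512 * c ^ 2) (8 * c) μ := by
  have hc' : 0 < (c : ℝ) := NNReal.coe_pos.2 (pos_iff_ne_zero.2 hc)
  obtain ⟨hexp, hexp_le⟩ := integrable_and_integral_exp_sq_div_le_sqrt_two hc hX
  have hsq : Integrable (fun ω ↦ X ω ^ 2) μ := (hX.memLp 2).integrable_sq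
  set m := ∫ ω, X ω ^ 2 ∂μ with hm
  have hm0 : 0 ≤ m := integral_nonneg fun ω ↦ sq_nonneg _
  have hbound (ω : Ω) : Real.exp (2 * (|X ω ^ 2 - m| / (8 * c))) ≤
      √2 * Real.exp (X ω ^ 2 / (4 * c)) := by
    have habs : |X ω ^ 2 - m| ≤ m + X ω ^ 2 :=
      abs_sub_le_iff.2 ⟨by linarith, by linarith [sq_nonneg (X ω)]⟩
    calc Real.exp (2 * (|X ω ^ 2 - m| / (8 * c)))
        ≤ Real.exp (2 * ((m + X ω ^ 2) / (8 * c))) := by gcongr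
      _ = Real.exp (m / (4 * c)) * Real.exp (X ω ^ 2 / (4 * c)) := by
          rw [← Real.exp_add]
          congr 1
          ring
      _ ≤ √2 * Real.exp (X ω ^ 2 / (4 * c)) := by
          gcongr
          exact exp_integral_sq_div_le_sqrt_two hc hX
  have hdom : Integrable (fun ω ↦ Real.exp (2 * (|X ω ^ 2 - m| / (8 * c)))) μ := by
    have hXm : AEMeasurable X μ := hX.aemeasurable
    refine (hexp.const_mul √2).mono' (AEMeasurable.aestronglyMeasurable (by fun_prop))
      (ae_of_all _ fun ω ↦ ?_)
    rw [Real.norm_eq_abs, Real.abs_exp]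
    exact hbound ω
  have hM : ∫ ω, Real.exp (2 * (|X ω ^ 2 - m| / (8 * c))) ∂μ ≤ 2 := calc
    _ ≤ ∫ ω, √2 * Real.exp (X ω ^ 2 / (4 * c)) ∂μ :=
        integral_mono hdom (hexp.const_mul _) hbound
    _ ≤ √2 * √2 := by
        rw [integral_const_mul]
        gcongr
    _ = 2 := Real.mul_self_sqrt zero_le_two
  have hmean : ∫ ω, (X ω ^ 2 - m) ∂μ = 0 := by
    rw [integral_sub hsq (integrable_const m), integral_const, probReal_univ, one_smul, ← hm,
      sub_self]
  have hv : 512 * (c : ℝ) ^ 2 = 4 * 2 * (8 * c) ^ 2 := by ring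
  rw [hv]
  exact .of_integral_exp_abs_le (by positivity) (hsq.sub (integrable_const m)) hmean hdom hM

end SubgaussianSq

section Net

variable {E : Type*} [NormedAddCommGroup E] [NormedSpace ℝ E] [FiniteDimensional ℝ E]

lemma card_le_five_pow_of_isSeparated {s : Finset E} (hs : (s : Set E) ⊆ closedBall 0 1)
    (hsep : IsSeparated ((1 / 2 : ℝ≥0) : ℝ≥0∞) (s : Set E)) :
    s.card ≤ 5 ^ Module.finrank ℝ E := by
  classical
  have hinj : Function.Injective fun x : E ↦ (2 : ℝ) • x := smul_right_injective E two_ne_zero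
  rw [← Finset.card_image_of_injective s hinj]
  refine Besicovitch.card_le_of_separated _ ?_ ?_
  · simp only [Finset.forall_mem_image, norm_smul, Real.norm_ofNat]
    intro x hx
    linarith [mem_closedBall_zero_iff.1 (hs hx)]
  · simp only [Finset.forall_mem_image, ← smul_sub, norm_smul, Real.norm_ofNat]
    intro x hx y hy hxy
    have h : (1 / 2 : ℝ) < dist x y := by
      have h : ((1 / 2 : ℝ≥0) : ℝ≥0∞) < edist x y := hsep hx hy (ne_of_apply_ne _ hxy)
      rw [edist_nndist, ENNReal.coe_lt_coe, ← NNReal.coe_lt_coe] at h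
      simpa using h
    rw [dist_eq_norm] at h
    linarith

lemma packingNumber_half_le_five_pow {s : Set E} (hs : s ⊆ closedBall 0 1) :
    packingNumber (1 / 2) s ≤ (5 ^ Module.finrank ℝ E : ℕ) := by
  refine iSup_le fun C ↦ iSup_le fun hC ↦ iSup_le fun hsep ↦ ?_
  by_contra! hlt
  obtain ⟨t, htC, ht⟩ := Set.exists_subset_encard_eq (Order.add_one_le_of_lt hlt)
  have hfin : t.Finite := Set.finite_of_encard_eq_coe (k := 5 ^ Module.finrank ℝ E + 1) ht
  lift t to Finset E using hfin
  have hcard := card_le_five_pow_of_isSeparated (htC.trans (hC.trans hs)) (hsep.subset htC)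
  rw [Set.encard_coe_eq_coe_finsetCard] at ht
  norm_cast at ht
  omega

lemma exists_finset_isCover_sphere : ∃ N : Finset E, (N : Set E) ⊆ sphere 0 1 ∧
    N.card ≤ 5 ^ Module.finrank ℝ E ∧ IsCover (1 / 2) (sphere (0 : E) 1) (N : Set E) := by
  have hle : coveringNumber (1 / 2) (sphere (0 : E) 1) ≤ (5 ^ Module.finrank ℝ E : ℕ) :=
    (coveringNumber_le_packingNumber _ _).trans
      (packingNumber_half_le_five_pow sphere_subset_closedBall)
  obtain ⟨N, hN, hfin, hcover, hcard⟩ := exists_set_encard_eq_coveringNumber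
    (ne_top_of_le_ne_top (ENat.natCast_ne_top _) hle)
  lift N to Finset E using hfin
  rw [← hcard, Set.encard_coe_eq_coe_finsetCard] at hle
  exact ⟨N, hN, mod_cast hle, hcover⟩

end Net

section NormOfNet

variable {E : Type*} [NormedAddCommGroup E] [InnerProductSpace ℝ E]

lemma norm_sub_mul_norm_add_le {x y : E} {ε : ℝ} (hx : ‖x‖ = 1) (hy : ‖y‖ = 1)
    (hxy : ‖x - y‖ ≤ ε) (hε : ε ^ 2 ≤ 2) : ‖x - y‖ * ‖x + y‖ ≤ ε * √(4 - ε ^ 2) := by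
  have hε0 : 0 ≤ ε := (norm_nonneg _).trans hxy
  have hpar : ‖x + y‖ ^ 2 = 4 - ‖x - y‖ ^ 2 := by
    have h := parallelogram_law_with_norm ℝ x y
    rw [hx, hy] at h
    linarith
  have hsq : ‖x - y‖ ^ 2 ≤ ε ^ 2 := by gcongr
  refine abs_le_of_sq_le_sq' ?_ (by positivity) |>.2
  rw [mul_pow, mul_pow, hpar, Real.sq_sqrt (by linarith)]
  nlinarith

-- Polarisation: `⟪T x, x⟫ - ⟪T y, y⟫ = ⟪T (x - y), x + y⟫` for symmetric `T`.
lemma abs_inner_sub_inner_le {T : E →L[ℝ] E} (hT : (T : E →ₗ[ℝ] E).IsSymmetric) (x y : E) :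
    |inner ℝ (T x) x - inner ℝ (T y) y| ≤ ‖T‖ * (‖x - y‖ * ‖x + y‖) := by
  have hpolar : inner ℝ (T x) x - inner ℝ (T y) y = inner ℝ (T (x - y)) (x + y) := by
    have hsymm : inner ℝ (T y) x = inner ℝ (T x) y := by
      rw [real_inner_comm]
      exact (hT x y).symm
    rw [map_sub, inner_sub_left, inner_add_right, inner_add_right, hsymm]
    ring
  calc |inner ℝ (T x) x - inner ℝ (T y) y| ≤ ‖T (x - y)‖ * ‖x + y‖ := by
        rw [hpolar]
        exact abs_real_inner_le_norm _ _
    _ ≤ ‖T‖ * ‖x - y‖ * ‖x + y‖ := by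
        gcongr
        exact T.le_opNorm _
    _ = ‖T‖ * (‖x - y‖ * ‖x + y‖) := mul_assoc _ _ _

lemma norm_le_of_forall_abs_inner_le {T : E →L[ℝ] E} (hT : (T : E →ₗ[ℝ] E).IsSymmetric) {M : ℝ}
    (hM : 0 ≤ M) (h : ∀ x : E, ‖x‖ = 1 → |inner ℝ (T x) x| ≤ M) : ‖T‖ ≤ M := by
  rw [ContinuousLinearMap.norm_eq_iSup_rayleighQuotient T hT]
  refine ciSup_le fun x ↦ ?_
  rcases eq_or_ne x 0 with rfl | hx
  · simpa using hM
  have hx' : (‖x‖⁻¹ : ℝ) ≠ 0 := inv_ne_zero (norm_ne_zero_iff.2 hx)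
  have hunit : ‖(‖x‖⁻¹ : ℝ) • x‖ = 1 := norm_smul_inv_norm hx
  rw [← T.rayleigh_smul x hx']
  simpa [ContinuousLinearMap.rayleighQuotient, ContinuousLinearMap.reApplyInnerSelf_apply, hunit]
    using h _ hunit

lemma norm_mul_one_sub_le_of_isCover {T : E →L[ℝ] E} (hT : (T : E →ₗ[ℝ] E).IsSymmetric)
    {N : Set E} (hN : N ⊆ sphere 0 1) {ε : ℝ≥0} (hcover : IsCover ε (sphere 0 1) N)
    (hε : (ε : ℝ) ^ 2 ≤ 2) {m : ℝ} (hm0 : 0 ≤ m) (hm : ∀ y ∈ N, |inner ℝ (T y) y| ≤ m) :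
    ‖T‖ * (1 - ε * √(4 - ε ^ 2)) ≤ m := by
  suffices ‖T‖ ≤ m + ‖T‖ * (ε * √(4 - ε ^ 2)) by linarith
  refine norm_le_of_forall_abs_inner_le hT (by positivity) fun x hx ↦ ?_
  obtain ⟨y, hy, hxy : edist x y ≤ ε⟩ := hcover (mem_sphere_zero_iff_norm.2 hx)
  rw [edist_nndist, ENNReal.coe_le_coe, ← NNReal.coe_le_coe, coe_nndist, dist_eq_norm] at hxy
  have hpair : ‖x - y‖ * ‖x + y‖ ≤ ε * √(4 - ε ^ 2) :=
    norm_sub_mul_norm_add_le hx (mem_sphere_zero_iff_norm.1 (hN hy)) hxy hε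
  calc |inner ℝ (T x) x| ≤ |inner ℝ (T y) y| + |inner ℝ (T x) x - inner ℝ (T y) y| := by
        linarith [abs_sub_abs_le_abs_sub (inner ℝ (T x) x) (inner ℝ (T y) y)]
    _ ≤ m + ‖T‖ * (ε * √(4 - ε ^ 2)) := by
        refine add_le_add (hm y hy) ((abs_inner_sub_inner_le hT x y).trans ?_)
        gcongr ‖T‖ * ?_

lemma norm_le_thirty_two_mul_of_isCover_half {T : E →L[ℝ] E}
    (hT : (T : E →ₗ[ℝ] E).IsSymmetric) {N : Set E} (hN : N ⊆ sphere 0 1)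
    (hcover : IsCover (1 / 2) (sphere 0 1) N) {m : ℝ} (hm0 : 0 ≤ m)
    (hm : ∀ y ∈ N, |inner ℝ (T y) y| ≤ m) : ‖T‖ ≤ 32 * m := by
  have h := norm_mul_one_sub_le_of_isCover hT hN hcover (by norm_num) hm0 hm
  have hsqrt : √(4 - ((1 / 2 : ℝ≥0) : ℝ) ^ 2) ≤ 31 / 16 := by
    rw [Real.sqrt_le_left (by norm_num)]
    norm_num
  push_cast at h hsqrt
  nlinarith [norm_nonneg T]

variable {Ω : Type*} [MeasurableSpace Ω] {μ : Measure Ω}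

lemma measureReal_norm_gt_le_of_forall_abs_inner [FiniteDimensional ℝ E] [IsFiniteMeasure μ]
    {T : Ω → E →L[ℝ] E} (hT : ∀ ω, (T ω : E →ₗ[ℝ] E).IsSymmetric) {r p : ℝ} (hr : 0 ≤ r)
    (hp0 : 0 ≤ p)
    (hp : ∀ v : E, ‖v‖ = 1 → μ.real {ω | r ≤ |inner ℝ (T ω v) v|} ≤ p) :
    μ.real {ω | 32 * r < ‖T ω‖} ≤ 5 ^ Module.finrank ℝ E * p := by
  obtain ⟨N, hN, hcard, hcover⟩ := exists_finset_isCover_sphere (E := E)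
  have hsub : {ω | 32 * r < ‖T ω‖} ⊆ ⋃ v ∈ N, {ω | r ≤ |inner ℝ (T ω v) v|} := by
    intro ω hω
    simp only [Set.mem_iUnion, Set.mem_ofPred_eq, exists_prop]
    by_contra! h
    exact hω.not_ge (norm_le_thirty_two_mul_of_isCover_half (hT ω) hN hcover hr
      fun v hv ↦ (h v hv).le)
  calc μ.real {ω | 32 * r < ‖T ω‖}
      ≤ μ.real (⋃ v ∈ N, {ω | r ≤ |inner ℝ (T ω v) v|}) :=
        measureReal_mono hsub (measure_ne_top _ _)
    _ ≤ ∑ v ∈ N, μ.real {ω | r ≤ |inner ℝ (T ω v) v|} := measureReal_biUnion_finset_le N _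
    _ ≤ N.card * p := by
        rw [← nsmul_eq_mul]
        exact Finset.sum_le_card_nsmul N _ p fun v hv ↦ hp v (mem_sphere_zero_iff_norm.1 (hN hv))
    _ ≤ 5 ^ Module.finrank ℝ E * p := by
        gcongr
        exact_mod_cast hcard

end NormOfNet

section InversePerturbation

variable {A : Type*} [NormedRing A] [NormedAlgebra ℝ A] [HasSummableGeomSeries A] {a : A} {s : ℝ}

lemma isUnit_of_norm_sub_smul_one_lt (hs : 0 < s) (ha : ‖a - s • (1 : A)‖ < s) : IsUnit a := by
  have hnorm : ‖1 - s⁻¹ • a‖ < 1 := by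
    have h : 1 - s⁻¹ • a = -(s⁻¹ • (a - s • (1 : A))) := by
      rw [smul_sub, inv_smul_smul₀ hs.ne', neg_sub]
    rw [h, norm_neg, norm_smul, Real.norm_eq_abs, abs_inv, abs_of_pos hs, inv_mul_lt_one₀ hs]
    exact ha
  have hunit : IsUnit (s⁻¹ • a) := by
    simpa only [sub_sub_cancel] using isUnit_one_sub_of_norm_lt_one hnorm
  exact (isUnit_smul_iff (Units.mk0 s⁻¹ (inv_ne_zero hs.ne')) a).1 hunit

-- `d = a⁻¹ - s⁻¹` solves `d = -s⁻¹ (d + s⁻¹) (a - s)`, whose right side is at most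
-- `‖d‖ / 2 + ‖a - s‖ / s²`; absorb the first term.
lemma norm_ringInverse_sub_inv_smul_one_le [NormOneClass A] (hs : 0 < s)
    (ha : ‖a - s • (1 : A)‖ ≤ s / 2) :
    ‖Ring.inverse a - s⁻¹ • (1 : A)‖ ≤ 2 / s ^ 2 * ‖a - s • (1 : A)‖ := by
  have hunit : IsUnit a := isUnit_of_norm_sub_smul_one_lt hs (by linarith)
  set e := a - s • (1 : A) with he
  set d := Ring.inverse a - s⁻¹ • (1 : A) with hd
  have hfix : d = -(s⁻¹ • ((d + s⁻¹ • (1 : A)) * e)) := by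
    rw [hd, he, sub_add_cancel, mul_sub, Ring.inverse_mul_cancel a hunit, mul_smul_comm, mul_one,
      smul_sub, inv_smul_smul₀ hs.ne', neg_sub]
  have hinv : ‖s⁻¹ • (1 : A)‖ = s⁻¹ := by
    rw [norm_smul, norm_one, mul_one, Real.norm_eq_abs, abs_inv, abs_of_pos hs]
  have hle : ‖d‖ ≤ s⁻¹ * ((‖d‖ + s⁻¹) * ‖e‖) := by
    calc ‖d‖ = s⁻¹ * ‖(d + s⁻¹ • (1 : A)) * e‖ := by
          conv_lhs => rw [hfix]
          rw [norm_neg, norm_smul, Real.norm_eq_abs, abs_inv, abs_of_pos hs]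
      _ ≤ s⁻¹ * ((‖d‖ + s⁻¹) * ‖e‖) := by
          gcongr
          refine (norm_mul_le _ _).trans ?_
          gcongr
          exact (norm_add_le _ _).trans_eq (by rw [hinv])
  have habsorb : s⁻¹ * (‖d‖ * ‖e‖) ≤ ‖d‖ / 2 := by
    rw [inv_mul_le_iff₀ hs]
    nlinarith [norm_nonneg d]
  have hsplit : 2 / s ^ 2 * ‖e‖ = 2 * (s⁻¹ * (s⁻¹ * ‖e‖)) := by field_simp
  linarith [hsplit, add_mul ‖d‖ s⁻¹ ‖e‖, mul_add s⁻¹ (‖d‖ * ‖e‖) (s⁻¹ * ‖e‖)]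

end InversePerturbation

section Independence

variable {Ω : Type*} [MeasurableSpace Ω] {μ : Measure Ω}

lemma iIndepFun_curry {ι κ 𝓧 : Type*} [MeasurableSpace 𝓧] {X : ι → κ → Ω → 𝓧}
    (hX : ∀ i j, Measurable (X i j)) (h : iIndepFun (fun (p : ι × κ) ↦ X p.1 p.2) μ) :
    iIndepFun (fun i ω j ↦ X i j ω) μ := by
  have := h.isProbabilityMeasure
  have (i : ι) (j : κ) : IsProbabilityMeasure (μ.map (X i j)) :=
    Measure.isProbabilityMeasure_map (hX i j).aemeasurable
  have hrow (i : ι) : iIndepFun (X i) μ := 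
    h.precomp (g := fun j ↦ (i, j)) (Prod.mk_right_injective i)
  have hcurry : (fun ω i j ↦ X i j ω) =
      MeasurableEquiv.curry ι κ 𝓧 ∘ fun ω (p : ι × κ) ↦ X p.1 p.2 ω := rfl
  rw [iIndepFun_iff_map_fun_eq_infinitePi_map (by fun_prop)] at h ⊢
  rw [hcurry, ← Measure.map_map (by fun_prop) (by fun_prop), h,
    Measure.infinitePi_map_curry fun i j ↦ μ.map (X i j)]
  congr with i : 1
  exact ((iIndepFun_iff_map_fun_eq_infinitePi_map (by fun_prop)).1 (hrow i)).symm

lemma integral_sq_sum_eq_sum_integral_sq [IsFiniteMeasure μ] {ι : Type*}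
    {ξ : ι → Ω → ℝ} {s : Finset ι}
    (hL2 : ∀ i ∈ s, MemLp (ξ i) 2 μ) (hmean : ∀ i ∈ s, ∫ ω, ξ i ω ∂μ = 0)
    (hindep : Set.Pairwise s fun i j ↦ ξ i ⟂ᵢ[μ] ξ j) :
    ∫ ω, (∑ i ∈ s, ξ i ω) ^ 2 ∂μ = ∑ i ∈ s, ∫ ω, ξ i ω ^ 2 ∂μ := by
  have hsum : (fun ω ↦ ∑ i ∈ s, ξ i ω) = ∑ i ∈ s, ξ i := by
    ext ω
    rw [Finset.sum_apply]
  have hmean_sum : ∫ ω, ∑ i ∈ s, ξ i ω ∂μ = 0 := by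
    rw [integral_finsetSum _ fun i hi ↦ (hL2 i hi).integrable one_le_two]
    exact Finset.sum_eq_zero hmean
  calc ∫ ω, (∑ i ∈ s, ξ i ω) ^ 2 ∂μ = Var[∑ i ∈ s, ξ i; μ] := by
        rw [← hsum, variance_of_integral_eq_zero _ hmean_sum]
        exact (memLp_finsetSum s hL2).aemeasurable
    _ = ∑ i ∈ s, Var[ξ i; μ] := IndepFun.variance_sum hL2 hindep
    _ = ∑ i ∈ s, ∫ ω, ξ i ω ^ 2 ∂μ := Finset.sum_congr rfl fun i hi ↦
        variance_of_integral_eq_zero (hL2 i hi).aemeasurable (hmean i hi)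

end Independence

section RandomMatrix

variable {Ω ι κ : Type*} [MeasurableSpace Ω] {μ : Measure Ω}

/-- A random matrix with independent, centred, unit-variance, `1`-subgaussian entries: the matrix
`Z` underlying an anisotropic sample. -/
structure IsStandardSubgaussian (Z : Ω → Matrix ι κ ℝ) (μ : Measure Ω) : Prop where
  measurable_entry : ∀ i j, Measurable fun ω ↦ Z ω i j
  iIndepFun_entry : iIndepFun (fun (p : ι × κ) ω ↦ Z ω p.1 p.2) μ
  integral_entry : ∀ i j, ∫ ω, Z ω i j ∂μ = 0
  integral_entry_sq : ∀ i j, ∫ ω, Z ω i j ^ 2 ∂μ = 1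
  hasSubgaussianMGF_entry : ∀ i j, HasSubgaussianMGF (fun ω ↦ Z ω i j) 1 μ

lemma IsAnisoSample.isStandardSubgaussian {n d : ℕ} {lam : Fin d → ℝ}
    {Z X : Ω → Matrix (Fin n) (Fin d) ℝ} {y : Fin n → ℝ} (h : IsAnisoSample μ lam Z X y) :
    IsStandardSubgaussian Z μ where
  measurable_entry := h.meas
  iIndepFun_entry := h.indep
  integral_entry := h.mean_zero
  integral_entry_sq := h.var_one
  hasSubgaussianMGF_entry i j := ⟨h.subg_int i j, by simpa [mgf] using h.subg i j⟩

namespace IsStandardSubgaussian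

variable {Z : Ω → Matrix ι κ ℝ} {v : ι → ℝ}

lemma iIndepFun_const_mul_entry (hZ : IsStandardSubgaussian Z μ) (v : ι → ℝ) (j : κ) :
    iIndepFun (fun i ω ↦ v i * Z ω i j) μ :=
  (hZ.iIndepFun_entry.precomp (g := fun i ↦ (i, j)) (Prod.mk_left_injective j)).comp
    (fun i x ↦ v i * x) fun i ↦ measurable_const_mul (v i)

variable [Fintype ι]

lemma measurable_vecMul (hZ : IsStandardSubgaussian Z μ) (v : ι → ℝ) (j : κ) :
    Measurable fun ω ↦ (v ᵥ* Z ω) j :=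
  Finset.measurable_fun_sum _ fun i _ ↦ (hZ.measurable_entry i j).const_mul (v i)

lemma iIndepFun_vecMul (hZ : IsStandardSubgaussian Z μ) (v : ι → ℝ) :
    iIndepFun (fun j ω ↦ (v ᵥ* Z ω) j) μ := by
  have hcol : iIndepFun (fun j ω i ↦ Z ω i j) μ :=
    iIndepFun_curry (X := fun j i ω ↦ Z ω i j) (fun j i ↦ hZ.measurable_entry i j)
      (hZ.iIndepFun_entry.precomp Prod.swap_injective)
  exact hcol.comp (fun _ z ↦ ∑ i, v i * z i) fun _ ↦ by fun_prop

lemma hasSubgaussianMGF_vecMul (hZ : IsStandardSubgaussian Z μ) (hv : ∑ i, v i ^ 2 = 1) (j : κ) :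
    HasSubgaussianMGF (fun ω ↦ (v ᵥ* Z ω) j) 1 μ := by
  convert HasSubgaussianMGF.sum_of_iIndepFun (hZ.iIndepFun_const_mul_entry v j)
    (s := Finset.univ) fun i _ ↦ (hZ.hasSubgaussianMGF_entry i j).const_mul (v i) using 1
  · rfl
  refine NNReal.eq ?_
  rw [NNReal.coe_one, NNReal.coe_sum, ← hv]
  exact Finset.sum_congr rfl fun i _ ↦ (mul_one (v i ^ 2)).symm

lemma integral_vecMul_sq (hZ : IsStandardSubgaussian Z μ) (hv : ∑ i, v i ^ 2 = 1) (j : κ) :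
    ∫ ω, (v ᵥ* Z ω) j ^ 2 ∂μ = 1 := by
  have := hZ.iIndepFun_entry.isProbabilityMeasure
  calc ∫ ω, (v ᵥ* Z ω) j ^ 2 ∂μ = ∑ i, ∫ ω, (v i * Z ω i j) ^ 2 ∂μ := by
        refine integral_sq_sum_eq_sum_integral_sq
          (fun i _ ↦ ((hZ.hasSubgaussianMGF_entry i j).memLp 2).const_mul (v i))
          (fun i _ ↦ ?_) fun i _ i' _ hi ↦ (hZ.iIndepFun_const_mul_entry v j).indepFun hi
        rw [integral_const_mul, hZ.integral_entry, mul_zero]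
    _ = 1 := by simp only [mul_pow, integral_const_mul, hZ.integral_entry_sq, mul_one, hv]

lemma hasSubexponentialMGF_vecMul_sq_sub_one (hZ : IsStandardSubgaussian Z μ)
    (hv : ∑ i, v i ^ 2 = 1) (j : κ) :
    HasSubexponentialMGF (fun ω ↦ (v ᵥ* Z ω) j ^ 2 - 1) 512 8 μ := by
  have := hZ.iIndepFun_entry.isProbabilityMeasure
  simpa [hZ.integral_vecMul_sq hv j] using
    hasSubexponentialMGF_sq_sub_integral one_ne_zero (hZ.hasSubgaussianMGF_vecMul hv j)

variable [Fintype κ] {a : κ → ℝ} {Λ : ℝ}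

lemma hasSubexponentialMGF_sum_mul_vecMul_sq_sub_one (hZ : IsStandardSubgaussian Z μ)
    (hv : ∑ i, v i ^ 2 = 1) (ha : ∀ j, |a j| ≤ Λ) :
    HasSubexponentialMGF (fun ω ↦ ∑ j, a j * ((v ᵥ* Z ω) j ^ 2 - 1)) (512 * ∑ j, a j ^ 2)
      (8 * Λ) μ := by
  have hindep : iIndepFun (fun j ω ↦ a j * ((v ᵥ* Z ω) j ^ 2 - 1)) μ :=
    (hZ.iIndepFun_vecMul v).comp (fun j x ↦ a j * (x ^ 2 - 1)) fun j ↦ by fun_prop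
  have hmeas (j : κ) : Measurable fun ω ↦ a j * ((v ᵥ* Z ω) j ^ 2 - 1) :=
    (((hZ.measurable_vecMul v j).pow_const 2).sub_const 1).const_mul (a j)
  rw [mul_comm 512, Finset.sum_mul]
  refine .sum_of_iIndepFun hindep hmeas fun j _ ↦
    ((hZ.hasSubexponentialMGF_vecMul_sq_sub_one hv j).const_mul (a j)).mono_scale ?_
  linarith [ha j]

end IsStandardSubgaussian

end RandomMatrix

section QuadraticForm

variable {ι κ : Type*} [Fintype κ] [DecidableEq κ]

lemma mul_transpose_eq_mul_diagonal_mul_transpose {X Z : Matrix ι κ ℝ} {lam : κ → ℝ}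
    (hlam : ∀ j, 0 ≤ lam j) (hX : ∀ i j, X i j = √(lam j) * Z i j) :
    X * Xᵀ = Z * diagonal lam * Zᵀ := by
  have hX' : X = Z * diagonal fun j ↦ √(lam j) := by
    ext i j
    rw [mul_diagonal, hX, mul_comm]
  rw [hX', transpose_mul, diagonal_transpose, ← Matrix.mul_assoc, Matrix.mul_assoc Z,
    diagonal_mul_diagonal]
  simp only [Real.mul_self_sqrt (hlam _)]

variable [Fintype ι]

lemma dotProduct_mul_diagonal_mul_transpose_mulVec (Z : Matrix ι κ ℝ) (a : κ → ℝ) (v : ι → ℝ) :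
    v ⬝ᵥ (Z * diagonal a * Zᵀ) *ᵥ v = ∑ j, a j * (v ᵥ* Z) j ^ 2 := by
  rw [← mulVec_mulVec, ← mulVec_mulVec, dotProduct_mulVec, mulVec_transpose, dotProduct]
  refine Finset.sum_congr rfl fun j _ ↦ ?_
  rw [mulVec_diagonal]
  ring

variable [DecidableEq ι]

lemma isSymmetric_toEuclideanCLM_mul_diagonal_mul_transpose_sub (Z : Matrix ι κ ℝ) (a : κ → ℝ)
    (s : ℝ) :
    (toEuclideanCLM (𝕜 := ℝ) (Z * diagonal a * Zᵀ - s • 1) :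
      EuclideanSpace ℝ ι →ₗ[ℝ] EuclideanSpace ℝ ι).IsSymmetric := by
  rw [coe_toEuclideanCLM_eq_toEuclideanLin, isSymmetric_toEuclideanLin_iff]
  refine IsHermitian.sub ?_ ?_
  · simp [IsHermitian, Matrix.mul_assoc]
  · simp [IsHermitian]

lemma inner_toEuclideanCLM_mul_diagonal_mul_transpose_sub (Z : Matrix ι κ ℝ) (a : κ → ℝ)
    {v : EuclideanSpace ℝ ι} (hv : ‖v‖ = 1) :
    inner ℝ (toEuclideanCLM (𝕜 := ℝ) (Z * diagonal a * Zᵀ - (∑ j, a j) • 1) v) v =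
      ∑ j, a j * ((v.ofLp ᵥ* Z) j ^ 2 - 1) := by
  have hv' : v.ofLp ⬝ᵥ v.ofLp = 1 := by
    rw [← one_pow 2, ← hv, EuclideanSpace.real_norm_sq_eq]
    simp only [dotProduct, sq]
  rw [real_inner_comm, inner_toEuclideanCLM, sub_mulVec, dotProduct_sub,
    dotProduct_mul_diagonal_mul_transpose_mulVec, smul_mulVec, one_mulVec, dotProduct_smul, hv']
  simp only [mul_sub, mul_one, Finset.sum_sub_distrib, smul_eq_mul]

end QuadraticForm

section GramConcentration

variable {Ω ι κ : Type*} [MeasurableSpace Ω] {μ : Measure Ω} [Fintype ι] [DecidableEq ι]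
  [Fintype κ] [DecidableEq κ] {Z : Ω → Matrix ι κ ℝ} {a : κ → ℝ} {Λ L : ℝ}

lemma measureReal_norm_mul_diagonal_mul_transpose_sub_gt_le (hZ : IsStandardSubgaussian Z μ)
    (hΛ : 0 < Λ) (ha : ∀ j, |a j| ≤ Λ) (hL : 0 ≤ L) :
    μ.real {ω | 32 * (√(2 * (512 * ∑ j, a j ^ 2) * L) + 2 * (8 * Λ) * L) <
      ‖Z ω * diagonal a * (Z ω)ᵀ - (∑ j, a j) • (1 : Matrix ι ι ℝ)‖} ≤
    5 ^ Fintype.card ι * (2 * Real.exp (-L)) := by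
  have := hZ.iIndepFun_entry.isProbabilityMeasure
  simp only [← l2_opNorm_toEuclideanCLM]
  rw [← finrank_euclideanSpace (𝕜 := ℝ)]
  refine measureReal_norm_gt_le_of_forall_abs_inner
    (fun ω ↦ isSymmetric_toEuclideanCLM_mul_diagonal_mul_transpose_sub (Z ω) a _)
    (by positivity) (by positivity) fun v hv ↦ ?_
  have hv' : ∑ i, v i ^ 2 = 1 := by rw [← EuclideanSpace.real_norm_sq_eq, hv, one_pow]
  simp only [inner_toEuclideanCLM_mul_diagonal_mul_transpose_sub _ a hv]
  exact (hZ.hasSubexponentialMGF_sum_mul_vecMul_sq_sub_one hv' ha).measureReal_abs_ge_le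
    (by positivity) hL

end GramConcentration

section Numerics

lemma five_pow_mul_two_mul_exp_le {n : ℕ} (hn : 0 < n) {δ : ℝ} (hδ0 : 0 < δ) (hδ1 : δ ≤ 1) :
    5 ^ n * (2 * Real.exp (-(4 * (n + Real.log (1 / δ))))) ≤ δ := by
  have hn' : (1 : ℝ) ≤ n := mod_cast hn
  have hlog : 0 ≤ Real.log (1 / δ) := Real.log_nonneg (one_le_one_div hδ0 hδ1)
  have h5 : (5 : ℝ) ≤ Real.exp 2 := by linarith [Real.quadratic_le_exp_of_nonneg zero_le_two]
  have h2 : (2 : ℝ) ≤ Real.exp 1 := by linarith [Real.add_one_le_exp 1]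
  calc 5 ^ n * (2 * Real.exp (-(4 * (n + Real.log (1 / δ)))))
      ≤ Real.exp 2 ^ n * (Real.exp 1 * Real.exp (-(4 * (n + Real.log (1 / δ))))) := by gcongr
    _ = Real.exp (n * 2 + (1 + -(4 * (n + Real.log (1 / δ))))) := by
        rw [Real.exp_add, Real.exp_add, Real.exp_nat_mul]
    _ ≤ Real.exp (-Real.log (1 / δ)) := Real.exp_le_exp.2 (by linarith)
    _ = δ := by rw [one_div, Real.log_inv, neg_neg, Real.exp_log hδ0]

lemma deviation_eq_mul_sqrt_div_add_div {S V Λ L : ℝ} (hS : 0 < S) :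
    32 * (√(2 * (512 * V) * (4 * L)) + 2 * (8 * Λ) * (4 * L)) =
      S * (2048 * (√(L / (S ^ 2 / V)) + L / (S / Λ))) := by
  have hsqrt : √(2 * (512 * V) * (4 * L)) = 64 * (S * √(L / (S ^ 2 / V))) := by
    have h : 2 * (512 * V) * (4 * L) = (64 * S) ^ 2 * (L / (S ^ 2 / V)) := by
      rw [div_div_eq_mul_div]
      field_simp
      ring
    rw [h, Real.sqrt_mul (by positivity), Real.sqrt_sq (by positivity), mul_assoc]
  have hlin : 2 * (8 * Λ) * (4 * L) = 64 * (S * (L / (S / Λ))) := by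
    rw [div_div_eq_mul_div]
    field_simp
    ring
  rw [hsqrt, hlin]
  ring

lemma sqrt_div_add_div_le {L D₂ D : ℝ} (hL : 0 < L) (hLD : 2 ^ 26 * L ≤ D) (hD : D ≤ D₂) :
    √(L / D₂) + L / D ≤ 1 / 4096 := by
  have hD0 : 0 < D := lt_of_lt_of_le (by positivity) hLD
  have hratio : L / D ≤ 1 / 2 ^ 26 := by
    rw [div_le_div_iff₀ hD0 (by norm_num)]
    linarith
  have hratio₂ : L / D₂ ≤ 1 / 2 ^ 26 := le_trans (by gcongr) hratio
  have hsqrt : √(L / D₂) ≤ 1 / 2 ^ 13 := by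
    rw [Real.sqrt_le_left (by norm_num)]
    exact hratio₂.trans (by norm_num)
  linarith

lemma sum_div_le_sq_sum_div_sum_sq {κ : Type*} [Fintype κ] {lam : κ → ℝ} {Λ : ℝ}
    (hlam : ∀ j, 0 ≤ lam j) (hΛ : ∀ j, lam j ≤ Λ) (hS : 0 < ∑ j, lam j) :
    (∑ j, lam j) / Λ ≤ (∑ j, lam j) ^ 2 / ∑ j, lam j ^ 2 := by
  obtain ⟨j, -, hj⟩ := Finset.exists_lt_of_sum_lt (s := Finset.univ) (f := 0) (g := lam)
    (by simpa using hS)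
  have hV : 0 < ∑ j, lam j ^ 2 :=
    Finset.sum_pos' (fun j _ ↦ sq_nonneg _) ⟨j, Finset.mem_univ j, pow_pos hj 2⟩
  have hsq : ∑ j, lam j ^ 2 ≤ (∑ j, lam j) * Λ := by
    rw [Finset.sum_mul]
    refine Finset.sum_le_sum fun j _ ↦ ?_
    rw [sq]
    exact mul_le_mul_of_nonneg_left (hΛ j) (hlam j)
  rw [div_le_div_iff₀ (lt_of_lt_of_le hj (hΛ j)) hV, sq, mul_assoc]
  gcongr

end Numerics

section InverseGram

lemma isUnit_det_and_norm_inv_sub_inv_smul_one_le {ι : Type*} [Fintype ι] [DecidableEq ι]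
    [Nonempty ι] {K : Matrix ι ι ℝ} {S η : ℝ} (hS : 0 < S) (hη : η ≤ 1 / 2)
    (hK : ‖K - S • (1 : Matrix ι ι ℝ)‖ ≤ S * η) :
    IsUnit K.det ∧ ‖K⁻¹ - S⁻¹ • (1 : Matrix ι ι ℝ)‖ ≤ 2 * η / S := by
  have hhalf : ‖K - S • (1 : Matrix ι ι ℝ)‖ ≤ S / 2 := hK.trans (by nlinarith)
  refine ⟨(isUnit_iff_isUnit_det K).1 (isUnit_of_norm_sub_smul_one_lt hS (by linarith)), ?_⟩
  rw [nonsing_inv_eq_ringInverse]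
  calc ‖Ring.inverse K - S⁻¹ • (1 : Matrix ι ι ℝ)‖
      ≤ 2 / S ^ 2 * ‖K - S • (1 : Matrix ι ι ℝ)‖ := norm_ringInverse_sub_inv_smul_one_le hS hhalf
    _ ≤ 2 / S ^ 2 * (S * η) := by gcongr
    _ = 2 * η / S := by field_simp

variable {Ω : Type*} [MeasurableSpace Ω] {μ : Measure Ω}

lemma ofReal_one_sub_le_measure_of_compl_subset [IsProbabilityMeasure μ] {A B : Set Ω} {δ : ℝ}
    (hδ : 0 ≤ δ) (hA : μ.real A ≤ δ) (hAB : Aᶜ ⊆ B) : ENNReal.ofReal (1 - δ) ≤ μ B := by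
  have hA' : μ A ≤ ENNReal.ofReal δ := by
    rw [← ofReal_measureReal]
    exact ENNReal.ofReal_le_ofReal hA
  rw [ENNReal.ofReal_sub _ hδ, ENNReal.ofReal_one, tsub_le_iff_left]
  calc 1 = μ (A ∪ Aᶜ) := by rw [Set.union_compl_self, measure_univ]
    _ ≤ μ A + μ Aᶜ := measure_union_le _ _
    _ ≤ ENNReal.ofReal δ + μ B := add_le_add hA' (measure_mono hAB)

end InverseGram

theorem stmt5_general {Ω ι κ : Type*} [MeasurableSpace Ω] {μ : Measure Ω} [Fintype ι]
    [DecidableEq ι] [Nonempty ι] [Fintype κ] {lam : κ → ℝ} (hlam : ∀ j, 0 ≤ lam j)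
    {Z X : Ω → Matrix ι κ ℝ} (hZ : IsStandardSubgaussian Z μ)
    (hX : ∀ ω i j, X ω i j = √(lam j) * Z ω i j) {δ : ℝ} (hδ0 : 0 < δ) (hδ1 : δ ≤ 1)
    (hdim : 2 ^ 26 * (Fintype.card ι + Real.log (1 / δ)) ≤ (∑ j, lam j) / ⨆ j, lam j) :
    ENNReal.ofReal (1 - δ) ≤
      μ {ω | IsUnit (X ω * (X ω)ᵀ).det ∧
        ‖(X ω * (X ω)ᵀ)⁻¹ - (∑ j, lam j)⁻¹ • (1 : Matrix ι ι ℝ)‖ ≤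
          (4096 / ∑ j, lam j) *
            (√((Fintype.card ι + Real.log (1 / δ)) / ((∑ j, lam j) ^ 2 / ∑ j, lam j ^ 2)) +
              (Fintype.card ι + Real.log (1 / δ)) / ((∑ j, lam j) / ⨆ j, lam j))} := by
  classical
  have := hZ.iIndepFun_entry.isProbabilityMeasure
  have hΛ (j : κ) : lam j ≤ ⨆ j, lam j := le_ciSup (Set.finite_range lam).bddAbove j
  have habs (j : κ) : |lam j| ≤ ⨆ j, lam j := (abs_of_nonneg (hlam j)).trans_le (hΛ j)
  set S := ∑ j, lam j
  set Λ := ⨆ j, lam j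
  set L := Fintype.card ι + Real.log (1 / δ)
  have hL : 0 < L := add_pos_of_pos_of_nonneg (mod_cast Fintype.card_pos)
    (Real.log_nonneg (one_le_one_div hδ0 hδ1))
  have hΛ0 : 0 ≤ Λ := Real.iSup_nonneg hlam
  have hdim0 : 0 < S / Λ := lt_of_lt_of_le (by positivity) hdim
  have hΛ' : 0 < Λ := hΛ0.lt_of_ne' (div_ne_zero_iff.1 hdim0.ne').2
  have hS : 0 < S := (div_pos_iff_of_pos_right hΛ').1 hdim0
  have hε := sqrt_div_add_div_le hL hdim (sum_div_le_sq_sum_div_sum_sq hlam hΛ hS)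
  have hbad := measureReal_norm_mul_diagonal_mul_transpose_sub_gt_le hZ hΛ' habs
    (by positivity : 0 ≤ 4 * L)
  rw [deviation_eq_mul_sqrt_div_add_div hS] at hbad
  refine ofReal_one_sub_le_measure_of_compl_subset hδ0.le
    (hbad.trans (five_pow_mul_two_mul_exp_le Fintype.card_pos hδ0 hδ1)) fun ω hω ↦ ?_
  rw [Set.mem_compl_iff, Set.mem_ofPred_eq, not_lt,
    ← mul_transpose_eq_mul_diagonal_mul_transpose hlam (hX ω)] at hω
  obtain ⟨hunit, hinv⟩ := isUnit_det_and_norm_inv_sub_inv_smul_one_le hS (by linarith) hω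
  exact ⟨hunit, hinv.trans_eq (by ring)⟩

/-- If `d∞ ≳ n + log(1/δ)`, then with probability `1 − δ` the Gram matrix `K = X Xᵀ` is
invertible and `K⁻¹` concentrates around `‖λ‖₁⁻¹ I` in ℓ₂ operator norm. -/
theorem stmt5 :
    ∃ c > (0 : ℝ), ∃ c₃ > (0 : ℝ),
      ∀ (Ω : Type*) (_ : MeasurableSpace Ω) (μ : Measure Ω), IsProbabilityMeasure μ →
      ∀ (n d : ℕ), 0 < n → 0 < d →
      ∀ (lam : Fin d → ℝ) (Z X : Ω → Matrix (Fin n) (Fin d) ℝ) (y : Fin n → ℝ),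
        IsAnisoSample μ lam Z X y →
      ∀ δ : ℝ, 0 < δ → δ < 1 / 2 →
        c₃ * (n + Real.log (1 / δ)) ≤ dimInf lam →
        ENNReal.ofReal (1 - δ) ≤
          μ {ω | IsUnit (X ω * (X ω)ᵀ).det ∧
              ‖(X ω * (X ω)ᵀ)⁻¹ - (∑ j, lam j)⁻¹ • (1 : Matrix (Fin n) (Fin n) ℝ)‖ ≤
                (c / ∑ j, lam j) *
                  (Real.sqrt ((n + Real.log (1 / δ)) / dim2 lam) +
                    (n + Real.log (1 / δ)) / dimInf lam)} := by
  refine ⟨4096, by norm_num, 2 ^ 26, by norm_num, ?_⟩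
  intro Ω _ μ _ n d hn _ lam Z X y hXy δ hδ0 hδ1 hdim
  have : Nonempty (Fin n) := Fin.pos_iff_nonempty.1 hn
  simpa only [Fintype.card_fin, dim2, dimInf] using
    stmt5_general (fun j ↦ (hXy.lam_pos j).le) hXy.isStandardSubgaussian hXy.X_eq hδ0
      (by linarith) (by simpa only [Fintype.card_fin, dimInf] using hdim)

end
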